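/- arXiv:2009.06262 — 4 statements merged into one kernel-verified Lean document; each statement's English description precedes it below -/
import Mathlib

section
/- Let n ≥ 3 be an integer and let β₁, β₂ ∈ (1, n) be real numbers such that 1/β₁ + 1/β₂ − 2/(n−2) > 0. Then there exists a real γ > 0 such that for every ε ∈ (0, 1) and all real numbers λ₁, λ₂ with λ₁ > 1/ε and λ₂ > 1/ε, one has (λ₁ λ₂)^{−(n−2)/2} ≤ ε^γ · (λ₁^{−β₁} + λ₂^{−β₂}). -/
/-!
Put `u = λ₁^{-β₁}`, `v = λ₂^{-β₂}`, `M = max u v` and `m = (n - 2) / 2`. Then `(λ₁λ₂)^{-m}` is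
`u^{m/β₁} v^{m/β₂} ≤ M^s` with `s = m/β₁ + m/β₂`, and the balance condition says exactly that
`s > 1`. Since `M ≤ ε^{min β₁ β₂}`, the surplus factor `M^{s-1}` is at most a positive power of `ε`,
while the remaining factor `M` is at most `u + v`.
-/

theorem rpow_mul_rpow_le_max_rpow_add {u v a b : ℝ} (hu : 0 ≤ u) (hv : 0 ≤ v)
    (ha : 0 ≤ a) (hb : 0 ≤ b) : u ^ a * v ^ b ≤ max u v ^ (a + b) := by
  rw [Real.rpow_add_of_nonneg (hu.trans (le_max_left u v)) ha hb]
  gcongr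
  · exact le_max_left u v
  · exact le_max_right u v

theorem rpow_neg_le_rpow_of_inv_le {ε l β : ℝ} (hε : 0 < ε) (hl : ε⁻¹ ≤ l) (hβ : 0 ≤ β) :
    l ^ (-β) ≤ ε ^ β := by
  calc l ^ (-β) ≤ ε⁻¹ ^ (-β) :=
        Real.rpow_le_rpow_of_nonpos (inv_pos.2 hε) hl (neg_nonpos.2 hβ)
    _ = ε ^ β := by rw [Real.rpow_neg_eq_inv_rpow, inv_inv]

theorem max_rpow_neg_le_rpow_min {ε l₁ l₂ β₁ β₂ : ℝ} (hε : 0 < ε) (hε1 : ε ≤ 1)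
    (hl₁ : ε⁻¹ ≤ l₁) (hl₂ : ε⁻¹ ≤ l₂) (hβ₁ : 0 ≤ β₁) (hβ₂ : 0 ≤ β₂) :
    max (l₁ ^ (-β₁)) (l₂ ^ (-β₂)) ≤ ε ^ min β₁ β₂ :=
  max_le
    ((rpow_neg_le_rpow_of_inv_le hε hl₁ hβ₁).trans
      (Real.rpow_le_rpow_of_exponent_ge hε hε1 (min_le_left β₁ β₂)))
    ((rpow_neg_le_rpow_of_inv_le hε hl₂ hβ₂).trans
      (Real.rpow_le_rpow_of_exponent_ge hε hε1 (min_le_right β₁ β₂)))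

theorem rpow_neg_rpow_div {l β : ℝ} (hl : 0 ≤ l) (hβ : β ≠ 0) (m : ℝ) :
    (l ^ (-β)) ^ (m / β) = l ^ (-m) := by
  rw [← Real.rpow_mul hl, neg_mul, mul_div_cancel₀ m hβ]

theorem mul_rpow_neg_le_max_rpow {m l₁ l₂ β₁ β₂ : ℝ} (hm : 0 ≤ m) (hl₁ : 0 ≤ l₁) (hl₂ : 0 ≤ l₂)
    (hβ₁ : 0 < β₁) (hβ₂ : 0 < β₂) :
    (l₁ * l₂) ^ (-m) ≤ max (l₁ ^ (-β₁)) (l₂ ^ (-β₂)) ^ (m / β₁ + m / β₂) := by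
  calc (l₁ * l₂) ^ (-m)
      = (l₁ ^ (-β₁)) ^ (m / β₁) * (l₂ ^ (-β₂)) ^ (m / β₂) := by
        rw [Real.mul_rpow hl₁ hl₂, rpow_neg_rpow_div hl₁ hβ₁.ne', rpow_neg_rpow_div hl₂ hβ₂.ne']
    _ ≤ max (l₁ ^ (-β₁)) (l₂ ^ (-β₂)) ^ (m / β₁ + m / β₂) :=
        rpow_mul_rpow_le_max_rpow_add (by positivity) (by positivity) (by positivity)
          (by positivity)

theorem rpow_le_rpow_mul_self {x y a s : ℝ} (hx : 0 < x) (hy : 0 ≤ y) (hxy : x ≤ y ^ a)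
    (hs : 1 ≤ s) : x ^ s ≤ y ^ (a * (s - 1)) * x := by
  calc x ^ s = x ^ (s - 1) * x := by rw [← Real.rpow_add_one hx.ne', sub_add_cancel]
    _ ≤ (y ^ a) ^ (s - 1) * x :=
        mul_le_mul_of_nonneg_right (Real.rpow_le_rpow hx.le hxy (sub_nonneg.2 hs)) hx.le
    _ = y ^ (a * (s - 1)) * x := by rw [Real.rpow_mul hy]

theorem mul_rpow_neg_le_rpow_mul_max {m ε l₁ l₂ β₁ β₂ : ℝ} (hm : 0 ≤ m)
    (hβ₁ : 0 < β₁) (hβ₂ : 0 < β₂) (hs : 1 ≤ m / β₁ + m / β₂) (hε : 0 < ε) (hε1 : ε ≤ 1)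
    (hl₁ : ε⁻¹ ≤ l₁) (hl₂ : ε⁻¹ ≤ l₂) :
    (l₁ * l₂) ^ (-m) ≤
      ε ^ (min β₁ β₂ * (m / β₁ + m / β₂ - 1)) * max (l₁ ^ (-β₁)) (l₂ ^ (-β₂)) := by
  have hl₁_pos : 0 < l₁ := (inv_pos.2 hε).trans_le hl₁
  have hl₂_pos : 0 < l₂ := (inv_pos.2 hε).trans_le hl₂
  exact (mul_rpow_neg_le_max_rpow hm hl₁_pos.le hl₂_pos.le hβ₁ hβ₂).trans
    (rpow_le_rpow_mul_self (lt_max_of_lt_left (Real.rpow_pos_of_pos hl₁_pos _)) hε.le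
      (max_rpow_neg_le_rpow_min hε hε1 hl₁ hl₂ hβ₁.le hβ₂.le) hs)

theorem stmt_0_general (n : ℝ) (hn : 2 < n) (β₁ β₂ : ℝ) (hβ₁ : 0 < β₁) (hβ₂ : 0 < β₂)
    (hbal : 0 < 1 / β₁ + 1 / β₂ - 2 / (n - 2)) :
    ∃ γ : ℝ, 0 < γ ∧ ∀ ε ∈ Set.Ioc (0 : ℝ) 1, ∀ l₁ l₂ : ℝ,
      1 / ε ≤ l₁ → 1 / ε ≤ l₂ →
      (l₁ * l₂) ^ (-(n - 2) / 2) ≤ ε ^ γ * (l₁ ^ (-β₁) + l₂ ^ (-β₂)) := by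
  set m := (n - 2) / 2 with hm_def
  have hm : 0 < m := half_pos (sub_pos.2 hn)
  have hsurplus : 0 < m / β₁ + m / β₂ - 1 := by
    have hfactor : m / β₁ + m / β₂ - 1 = m * (1 / β₁ + 1 / β₂ - 2 / (n - 2)) := by
      have hn_sub : n - 2 ≠ 0 := (sub_pos.2 hn).ne'
      rw [hm_def]
      field_simp
    exact hfactor ▸ mul_pos hm hbal
  refine ⟨min β₁ β₂ * (m / β₁ + m / β₂ - 1), mul_pos (lt_min hβ₁ hβ₂) hsurplus, ?_⟩
  rintro ε ⟨hε, hε1⟩ l₁ l₂ hl₁ hl₂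
  rw [one_div] at hl₁ hl₂
  have hl₁_nonneg : 0 ≤ l₁ := (inv_pos.2 hε).le.trans hl₁
  have hl₂_nonneg : 0 ≤ l₂ := (inv_pos.2 hε).le.trans hl₂
  rw [neg_div]
  refine (mul_rpow_neg_le_rpow_mul_max hm.le hβ₁ hβ₂ (sub_pos.1 hsurplus).le hε hε1
    hl₁ hl₂).trans ?_
  gcongr
  exact max_le_add_of_nonneg (by positivity) (by positivity)

/-- Lemma 3.2 (interaction estimate): if `1/β₁ + 1/β₂ > 2/(n-2)` then the mutual
interaction `(λ₁λ₂)^{-(n-2)/2}` is `o(λ₁^{-β₁} + λ₂^{-β₂})`. -/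
theorem stmt_0 (n : ℕ) (hn : 3 ≤ n) (β₁ β₂ : ℝ)
    (hβ₁ : β₁ ∈ Set.Ioo 1 (n : ℝ)) (hβ₂ : β₂ ∈ Set.Ioo 1 (n : ℝ))
    (hbal : 0 < 1 / β₁ + 1 / β₂ - 2 / ((n : ℝ) - 2)) :
    ∃ γ : ℝ, 0 < γ ∧ ∀ ε ∈ Set.Ioo (0 : ℝ) 1, ∀ l₁ l₂ : ℝ,
      1 / ε < l₁ → 1 / ε < l₂ →
      (l₁ * l₂) ^ (-((n : ℝ) - 2) / 2) ≤ ε ^ γ * (l₁ ^ (-β₁) + l₂ ^ (-β₂)) := by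
  obtain ⟨γ, hγ, hle⟩ := stmt_0_general n (by exact_mod_cast hn) β₁ β₂
    (one_pos.trans hβ₁.1) (one_pos.trans hβ₂.1) hbal
  exact ⟨γ, hγ, fun ε hε l₁ l₂ hl₁ hl₂ => hle ε ⟨hε.1, hε.2.le⟩ l₁ l₂ hl₁.le hl₂.le⟩
end

section
/- Let n ≥ 3 be an integer and let β₁, β₂ ∈ (1, n) be real numbers such that 1/β₁ + 1/β₂ − 2/(n−2) < 0, and set κ = 2β₁β₂/(n−2) − β₁ − β₂ (which is then positive). Let M ≥ 1 and let γ be any real with 0 < γ < (n−2)κ/(2β₂). Then there exists ε₀ ∈ (0, 1) such that for every ε ∈ (0, ε₀) and all real numbers λ₁, λ₂ with λ₁ > 1/ε, λ₂ > 1/ε and λ₂^{β₂} ≤ M λ₁^{β₁}, one has (λ₁ λ₂)^{(n−2)/2} ≤ ε^γ λ₁^{β₁}; equivalently λ₁^{−β₁} ≤ ε^γ (λ₁ λ₂)^{−(n−2)/2}. -/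
/-!
Comparability bounds `λ₂` by a constant times `λ₁ ^ (β₁ / β₂)`, so with `p = (n - 2) / 2` the
product `(λ₁ λ₂) ^ p` is at most `M ^ (p / β₂) * λ₁ ^ (p + p β₁ / β₂)`, and the exponent of `λ₁` is
`β₁ - δ` for `δ = (n - 2) κ / (2 β₂)`. Since `λ₁ > 1 / ε`, the gain `λ₁ ^ (-δ)` is at most `ε ^ δ`,
and the surplus `ε ^ (δ - γ)` absorbs the constant `M ^ (p / β₂)` once `ε` is small.
-/

open Set Filter Topology

lemma mul_rpow_le_of_rpow_le_mul_rpow {a b p M x y : ℝ} (hb : 0 < b) (hp : 0 ≤ p)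
    (hx : 0 < x) (hy : 0 ≤ y) (h : y ^ b ≤ M * x ^ a) :
    (x * y) ^ p ≤ M ^ (p / b) * x ^ (p + p * a / b) := by
  have hM : 0 ≤ M :=
    nonneg_of_mul_nonneg_left ((Real.rpow_nonneg hy b).trans h) (Real.rpow_pos_of_pos hx a)
  have hyp : y ^ p ≤ M ^ (p / b) * x ^ (p * a / b) :=
    calc y ^ p = (y ^ b) ^ (p / b) := by rw [← Real.rpow_mul hy, mul_div_cancel₀ p hb.ne']
      _ ≤ (M * x ^ a) ^ (p / b) := by gcongr
      _ = M ^ (p / b) * x ^ (p * a / b) := by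
        rw [Real.mul_rpow hM (by positivity), ← Real.rpow_mul hx.le, mul_div_left_comm,
          mul_div_assoc]
  calc (x * y) ^ p = x ^ p * y ^ p := Real.mul_rpow hx.le hy
    _ ≤ x ^ p * (M ^ (p / b) * x ^ (p * a / b)) := by gcongr
    _ = M ^ (p / b) * x ^ (p + p * a / b) := by rw [Real.rpow_add hx]; ring

lemma rpow_sub_le_rpow_mul_rpow {ε x δ : ℝ} (hε : 0 < ε) (hx : 1 / ε ≤ x) (hδ : 0 ≤ δ) (a : ℝ) :
    x ^ (a - δ) ≤ ε ^ δ * x ^ a := by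
  have hx₀ : 0 < x := (one_div_pos.2 hε).trans_le hx
  have one_le : 1 ≤ ε ^ δ * x ^ δ := by
    rw [← Real.mul_rpow hε.le hx₀.le]
    exact Real.one_le_rpow ((div_le_iff₀' hε).1 hx) hδ
  calc x ^ (a - δ) ≤ ε ^ δ * x ^ δ * x ^ (a - δ) := le_mul_of_one_le_left (by positivity) one_le
    _ = ε ^ δ * x ^ a := by rw [mul_assoc, ← Real.rpow_add hx₀, add_sub_cancel]

lemma exists_forall_mul_rpow_le_one (C : ℝ) {s : ℝ} (hs : 0 < s) :
    ∃ ε₀ ∈ Ioo (0 : ℝ) 1, ∀ ε ∈ Ioo 0 ε₀, C * ε ^ s ≤ 1 := by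
  have tendsto_zero : Tendsto (fun ε : ℝ ↦ C * ε ^ s) (𝓝 0) (𝓝 0) := by
    simpa only [Real.zero_rpow hs.ne', mul_zero] using
      ((Real.continuousAt_rpow_const 0 s (.inr hs.le)).tendsto.const_mul C)
  have eventually_le : ∀ᶠ ε in 𝓝[>] (0 : ℝ), C * ε ^ s ≤ 1 :=
    (tendsto_zero.mono_left nhdsWithin_le_nhds).eventually_le_const one_pos
  obtain ⟨ε₀, ⟨hε₀, hε₀'⟩, h⟩ :=
    (mem_nhdsGT_iff_exists_mem_Ioc_Ioo_subset (one_half_pos (α := ℝ))).1 eventually_le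
  exact ⟨ε₀, ⟨hε₀, hε₀'.trans_lt one_half_lt_one⟩, h⟩

lemma rpow_neg_le_mul_rpow_neg_iff {x y : ℝ} (hx : 0 < x) (hy : 0 < y) (a p c : ℝ) :
    x ^ (-a) ≤ c * y ^ (-p) ↔ y ^ p ≤ c * x ^ a := by
  rw [Real.rpow_neg hx.le, Real.rpow_neg hy.le, ← div_eq_mul_inv, le_div_iff₀ (by positivity),
    inv_mul_le_iff₀ (by positivity), mul_comm (x ^ a)]

theorem stmt_1_general {n β₁ β₂ κ γ : ℝ} (hn : 2 < n) (hβ₂ : 0 < β₂)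
    (hκ : κ = 2 * β₁ * β₂ / (n - 2) - β₁ - β₂) (M : ℝ)
    (hγ : 0 < γ) (hγ' : γ < (n - 2) * κ / (2 * β₂)) :
    ∃ ε₀ ∈ Ioo (0 : ℝ) 1, ∀ ε ∈ Ioo 0 ε₀, ∀ l₁ l₂ : ℝ,
      1 / ε ≤ l₁ → 0 < l₂ → l₂ ^ β₂ ≤ M * l₁ ^ β₁ →
      (l₁ * l₂) ^ ((n - 2) / 2) ≤ ε ^ γ * l₁ ^ β₁ ∧
      l₁ ^ (-β₁) ≤ ε ^ γ * (l₁ * l₂) ^ (-(n - 2) / 2) := by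
  have hn₀ : 0 < n - 2 := sub_pos.2 hn
  set p := (n - 2) / 2 with hp
  set δ := (n - 2) * κ / (2 * β₂) with hδ
  have exponent_eq : p + p * β₁ / β₂ = β₁ - δ := by rw [hδ, hκ, hp]; field_simp; ring
  obtain ⟨ε₀, hε₀, absorb⟩ := exists_forall_mul_rpow_le_one (M ^ (p / β₂)) (sub_pos.2 hγ')
  refine ⟨ε₀, hε₀, fun ε hε l₁ l₂ h₁ h₂ h ↦ ?_⟩
  have hε' : 0 < ε := hε.1
  have hl₁ : 0 < l₁ := (one_div_pos.2 hε').trans_le h₁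
  have hM : 0 < M := pos_of_mul_pos_left ((Real.rpow_pos_of_pos h₂ β₂).trans_le h) (by positivity)
  have product_le : (l₁ * l₂) ^ p ≤ ε ^ γ * l₁ ^ β₁ :=
    calc (l₁ * l₂) ^ p ≤ M ^ (p / β₂) * l₁ ^ (β₁ - δ) :=
        exponent_eq ▸ mul_rpow_le_of_rpow_le_mul_rpow hβ₂ (by positivity) hl₁ h₂.le h
      _ ≤ M ^ (p / β₂) * (ε ^ δ * l₁ ^ β₁) := by
        gcongr
        exact rpow_sub_le_rpow_mul_rpow hε' h₁ (hγ.trans hγ').le β₁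
      _ = M ^ (p / β₂) * ε ^ (δ - γ) * (ε ^ γ * l₁ ^ β₁) := by
        rw [← sub_add_cancel δ γ, Real.rpow_add hε', sub_add_cancel]; ring
      _ ≤ ε ^ γ * l₁ ^ β₁ := mul_le_of_le_one_left (by positivity) (absorb ε hε)
  rw [neg_div]
  exact ⟨product_le, (rpow_neg_le_mul_rpow_neg_iff hl₁ (mul_pos hl₁ h₂) β₁ p _).2 product_le⟩

/-- Lemma 3.6 together with inequality (3.10): if `1/β₁ + 1/β₂ < 2/(n-2)` and the
weighted concentrations are comparable, the self-interaction `λ₁^{-β₁}` is negligible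
compared with the mutual interaction `(λ₁λ₂)^{-(n-2)/2}`. -/
theorem stmt_1 (n : ℕ) (hn : 3 ≤ n) (β₁ β₂ : ℝ)
    (hβ₁ : β₁ ∈ Set.Ioo 1 (n : ℝ)) (hβ₂ : β₂ ∈ Set.Ioo 1 (n : ℝ))
    (hbal : 1 / β₁ + 1 / β₂ - 2 / ((n : ℝ) - 2) < 0)
    (κ : ℝ) (hκ : κ = 2 * β₁ * β₂ / ((n : ℝ) - 2) - β₁ - β₂)
    (M : ℝ) (hM : 1 ≤ M)
    (γ : ℝ) (hγ : 0 < γ) (hγ' : γ < ((n : ℝ) - 2) * κ / (2 * β₂)) :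
    ∃ ε₀ ∈ Set.Ioo (0 : ℝ) 1, ∀ ε ∈ Set.Ioo (0 : ℝ) ε₀, ∀ l₁ l₂ : ℝ,
      1 / ε < l₁ → 1 / ε < l₂ → l₂ ^ β₂ ≤ M * l₁ ^ β₁ →
      (l₁ * l₂) ^ (((n : ℝ) - 2) / 2) ≤ ε ^ γ * l₁ ^ β₁ ∧
      l₁ ^ (-β₁) ≤ ε ^ γ * (l₁ * l₂) ^ (-((n : ℝ) - 2) / 2) := by
  obtain ⟨ε₀, hε₀, h⟩ := stmt_1_general (by exact_mod_cast hn) (by linarith [hβ₂.1]) hκ M hγ hγ'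
  exact ⟨ε₀, hε₀, fun ε hε l₁ l₂ h₁ h₂ ↦ h ε hε l₁ l₂ h₁.le ((one_div_pos.2 hε.1).trans h₂)⟩
end

section
/- Let n ≥ 3 be an integer and t₀ > 0. For all real numbers λ, μ ≥ √(8/t₀) and all t ≥ t₀, the function f(μ) = (λ/μ + μ/λ + λμt/2)^{−(n−2)/2} satisfies μ f′(μ) ≤ −((n−2)/4) · (λ/μ + μ/λ + λμt/2)^{−(n−2)/2}. -/
/-! Write `A x = l / x + x / l + l * x * t / 2`. Only the term `l / x` decreases in `x`, so
`x * A' x = A x - 2 * (l / x)`. When `x ^ 2 * t ≥ 6`, the last term of `A` alone is at least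
`3 * (l / x)`, hence `A x ≥ 4 * (l / x)` and `x * A' x ≥ A x / 2`: as a function of
`log x`, `log A` grows at rate at least `1 / 2`. -/

/-- The base `l / x + x / l + l * x * t / 2` of the interaction of two bubbles with concentrations
`l` and `x`, where `t = 1 - cos d` for concentration points at distance `d` on the sphere. The
interaction itself is the power of this base with exponent `-(n - 2) / 2`. -/
noncomputable def interactionBase (l x t : ℝ) : ℝ := l / x + x / l + l * x * t / 2

theorem mul_deriv_rpow_const_le {f : ℝ → ℝ} {x a c q : ℝ} (hf : DifferentiableAt ℝ f x)
    (hfx : 0 < f x) (hq : q ≤ 0) (hc : c * f x ≤ a * deriv f x) :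
    a * deriv (fun y => f y ^ q) x ≤ q * c * f x ^ q := by
  have hcoeff : q * f x ^ (q - 1) ≤ 0 :=
    mul_nonpos_of_nonpos_of_nonneg hq (Real.rpow_nonneg hfx.le _)
  have hpow : f x ^ (q - 1) * f x = f x ^ q := by
    rw [← Real.rpow_add_one hfx.ne', sub_add_cancel]
  calc a * deriv (fun y => f y ^ q) x
      = q * f x ^ (q - 1) * (a * deriv f x) := by
        rw [(hf.hasDerivAt.rpow_const (Or.inl hfx.ne')).deriv]; ring
    _ ≤ q * f x ^ (q - 1) * (c * f x) := mul_le_mul_of_nonpos_left hc hcoeff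
    _ = q * c * (f x ^ (q - 1) * f x) := by ring
    _ = q * c * f x ^ q := by rw [hpow]

theorem le_sq_mul_of_sqrt_div_le {a t x : ℝ} (ht : 0 < t) (h : √(a / t) ≤ x) :
    a ≤ x ^ 2 * t :=
  (div_le_iff₀ ht).mp (Real.sqrt_le_iff.mp h).2

section interactionBase

variable {l x t : ℝ}

theorem hasDerivAt_interactionBase (hx : x ≠ 0) :
    HasDerivAt (fun y => interactionBase l y t) (-l / x ^ 2 + 1 / l + l * t / 2) x := by
  have hinv : HasDerivAt (fun y : ℝ => l / y) (-l / x ^ 2) x := by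
    simpa using (hasDerivAt_const x l).fun_div (hasDerivAt_id x) hx
  have hdiv : HasDerivAt (fun y : ℝ => y / l) (1 / l) x := (hasDerivAt_id x).div_const l
  have hmul : HasDerivAt (fun y : ℝ => l * y * t / 2) (l * t / 2) x := by
    simpa using (((hasDerivAt_id x).const_mul l).mul_const t).div_const 2
  exact (hinv.add hdiv).add hmul

theorem mul_deriv_interactionBase (hx : x ≠ 0) :
    x * deriv (fun y => interactionBase l y t) x = interactionBase l x t - 2 * (l / x) := by
  have hcancel : x * (l / x ^ 2) = l / x := by field_simp
  rw [(hasDerivAt_interactionBase hx).deriv, interactionBase]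
  linear_combination -hcancel

theorem four_mul_div_le_interactionBase (hl : 0 ≤ l) (hx : 0 < x) (hxt : 6 ≤ x ^ 2 * t) :
    4 * (l / x) ≤ interactionBase l x t := by
  have hlast : l * x * t / 2 = l / x * (x ^ 2 * t) / 2 := by field_simp
  have hlarge : l / x * 6 ≤ l / x * (x ^ 2 * t) := by gcongr
  have hmiddle : 0 ≤ x / l := by positivity
  unfold interactionBase
  linarith

end interactionBase

theorem stmt_10_general {q l μ t : ℝ} (hq : q ≤ 0) (hl : 0 < l) (hμ : 0 < μ)
    (hμt : 6 ≤ μ ^ 2 * t) :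
    μ * deriv (fun x => interactionBase l x t ^ q) μ
      ≤ q * (1 / 2) * interactionBase l μ t ^ q := by
  have hratio : 0 < l / μ := div_pos hl hμ
  have hbase : 4 * (l / μ) ≤ interactionBase l μ t :=
    four_mul_div_le_interactionBase hl.le hμ hμt
  refine mul_deriv_rpow_const_le (hasDerivAt_interactionBase hμ.ne').differentiableAt
    (by linarith) hq ?_
  rw [mul_deriv_interactionBase hμ.ne']
  linarith

/-- Estimate (eq1.2): when the concentration points stay a fixed distance apart
(`t ≥ t₀`) and the concentrations are large, `μ ∂ε/∂μ ≤ -((n-2)/4) ε`. -/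
theorem stmt_10 (n : ℕ) (hn : 3 ≤ n) (t₀ : ℝ) (ht₀ : 0 < t₀)
    (l μ t : ℝ) (hl : Real.sqrt (8 / t₀) ≤ l) (hμ : Real.sqrt (8 / t₀) ≤ μ)
    (ht : t₀ ≤ t) :
    μ * deriv (fun x : ℝ => (l / x + x / l + l * x * t / 2) ^ (-((n : ℝ) - 2) / 2)) μ
      ≤ -(((n : ℝ) - 2) / 4) * (l / μ + μ / l + l * μ * t / 2) ^ (-((n : ℝ) - 2) / 2) := by
  have hsqrt : 0 < √(8 / t₀) := by positivity
  have hexp : -((n : ℝ) - 2) / 2 ≤ 0 := by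
    have : (3 : ℝ) ≤ n := by exact_mod_cast hn
    linarith
  have hμt : 8 ≤ μ ^ 2 * t :=
    (le_sq_mul_of_sqrt_div_le ht₀ hμ).trans (by gcongr)
  have hrate : -(((n : ℝ) - 2) / 4) = -((n : ℝ) - 2) / 2 * (1 / 2) := by ring
  rw [hrate]
  exact stmt_10_general hexp (hsqrt.trans_le hl) (hsqrt.trans_le hμ) (by linarith)
end

section
/- Let n ≥ 3 be an integer. For all real numbers λ, μ > 0 with λ/2 ≤ μ ≤ 2λ and all t ≥ 0 such that λ/μ + μ/λ + λμt/2 ≥ 10, the function f(μ) = (λ/μ + μ/λ + λμt/2)^{−(n−2)/2} satisfies μ f′(μ) ≤ −((n−2)/4) · (λ/μ + μ/λ + λμt/2)^{−(n−2)/2}. -/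
/-!
In `μ` the bracket `B = λ/μ + μ/λ + λμt/2` consists of one term of degree `-1` and two of
degree `1`, so Euler's identity gives `μ ∂B/∂μ = B - 2λ/μ`. Hence `ε = B ^ (-a)` satisfies
`μ ∂ε/∂μ = -a (1 - 2(λ/μ)/B) ε`, and `1 - 2(λ/μ)/B` is at least `1/2` as soon as `B ≥ 4λ/μ`.
-/

/-- The quantity `λ/x + x/λ + λxt/2` for two bubbles of concentrations `l = λ` and `x`, whose power
of exponent `-(n - 2)/2` is the interaction `ε(λ, x, t)`. The varying concentration `x` comes last,
so that `bubbleBracket l t` is the function to differentiate. -/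
noncomputable def bubbleBracket (l t x : ℝ) : ℝ :=
  l / x + x / l + l * x * t / 2

theorem hasDerivAt_bubbleBracket (l t : ℝ) {x : ℝ} (hx : x ≠ 0) :
    HasDerivAt (bubbleBracket l t) ((bubbleBracket l t x - 2 * (l / x)) / x) x := by
  have h_inv : HasDerivAt (fun y => l / y) (l * -(x ^ 2)⁻¹) x :=
    (hasDerivAt_inv hx).const_mul l
  have h_div : HasDerivAt (fun y => y / l) (1 / l) x := (hasDerivAt_id x).div_const l
  have h_lin : HasDerivAt (fun y => l * y * t / 2) (l * 1 * t / 2) x :=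
    (((hasDerivAt_id x).const_mul l).mul_const t).div_const 2
  refine ((h_inv.add h_div).add h_lin).congr_deriv ?_
  unfold bubbleBracket
  field_simp
  ring

theorem mul_deriv_rpow_neg_le {f : ℝ → ℝ} {f' x a θ : ℝ} (hf : HasDerivAt f f' x)
    (hfx : 0 < f x) (ha : 0 ≤ a) (hθ : θ * f x ≤ x * f') :
    x * deriv (fun y => f y ^ (-a)) x ≤ -(a * θ) * f x ^ (-a) := by
  have h_coeff : 0 ≤ a * f x ^ (-a - 1) := by positivity
  calc x * deriv (fun y => f y ^ (-a)) x
      = -(a * f x ^ (-a - 1) * (x * f')) := by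
        rw [(hf.rpow_const (Or.inl hfx.ne')).deriv]
        ring
    _ ≤ -(a * f x ^ (-a - 1) * (θ * f x)) :=
        neg_le_neg (mul_le_mul_of_nonneg_left hθ h_coeff)
    _ = -(a * θ) * f x ^ (-a) := by
        rw [Real.rpow_sub_one hfx.ne']
        field_simp

theorem stmt_11_general {a l μ t θ : ℝ} (ha : 0 ≤ a) (hl : 0 < l) (hμ : 0 < μ) (hθ : θ ≤ 1)
    (hbig : 2 * (l / μ) ≤ (1 - θ) * bubbleBracket l t μ) :
    μ * deriv (fun x => bubbleBracket l t x ^ (-a)) μ ≤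
      -(a * θ) * bubbleBracket l t μ ^ (-a) := by
  have h_pos : 0 < bubbleBracket l t μ :=
    pos_of_mul_pos_right (lt_of_lt_of_le (by positivity) hbig) (sub_nonneg.mpr hθ)
  refine mul_deriv_rpow_neg_le (hasDerivAt_bubbleBracket l t hμ.ne') h_pos ha ?_
  rw [mul_div_cancel₀ _ hμ.ne']
  linarith

/-- Estimate (eq1.3): when the two concentrations are of the same order and the
interaction is small, `μ ∂ε/∂μ ≤ -((n-2)/4) ε`. -/
theorem stmt_11 (n : ℕ) (hn : 3 ≤ n) (l μ t : ℝ) (hl : 0 < l) (hμ : 0 < μ)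
    (h1 : l / 2 ≤ μ) (h2 : μ ≤ 2 * l) (ht : 0 ≤ t)
    (hbig : 10 ≤ l / μ + μ / l + l * μ * t / 2) :
    μ * deriv (fun x : ℝ => (l / x + x / l + l * x * t / 2) ^ (-((n : ℝ) - 2) / 2)) μ
      ≤ -(((n : ℝ) - 2) / 4) * (l / μ + μ / l + l * μ * t / 2) ^ (-((n : ℝ) - 2) / 2) := by
  have hn' : (3 : ℝ) ≤ n := mod_cast hn
  have h_ratio : l / μ ≤ 2 := (div_le_iff₀ hμ).mpr (by linarith)
  have h_coeff : ((n : ℝ) - 2) / 4 = (n - 2) / 2 * (1 / 2) := by ring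
  rw [neg_div, h_coeff]
  exact stmt_11_general (by linarith) hl hμ (by norm_num) (by unfold bubbleBracket; linarith)
end
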